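/- Let n ∈ ℕ, let j ∈ {0, 1, …, n−1}, and let k : (0,∞) → ℝ be locally integrable on [0,∞) and (n−j−1) times continuously differentiable on (0,∞), such that the (j+1)-fold integral I₀₊^{j+1} k is n times differentiable on (0,∞). Then for every t > 0, dⁿ/dtⁿ (k * h_{j+1})(t) = k^{(n−j−1)}(t), where h_{j+1}(t) = t^{j}/j!. Consequently, for f ∈ Cⁿ_{−1}(0,∞) and such a kernel k, the Caputo GFD of arbitrary order admits the representation (∗D_{(k)} f)(t) = (D_{(k)} f)(t) − ∑_{j=0}^{n−1} f^{(j)}(0) k^{(n−j−1)}(t) for t > 0. -/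

import Mathlib

open Real MeasureTheory Set Filter Topology

/-- The Laplace convolution `(f * g)(t) = ∫₀ᵗ f(t-τ) g(τ) dτ`. -/
noncomputable def lconv (f g : ℝ → ℝ) : ℝ → ℝ :=
  fun t => ∫ τ in (0:ℝ)..t, f (t - τ) * g τ

/-- The space `C_{-1}(0,∞)`: functions of the form `t^p f₁(t)` with `p > -1`
and `f₁` continuous on `[0,∞)`. -/
def Cm1 (f : ℝ → ℝ) : Prop :=
  ∃ p : ℝ, -1 < p ∧ ∃ f₁ : ℝ → ℝ, ContinuousOn f₁ (Set.Ici 0) ∧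
    ∀ t : ℝ, 0 < t → f t = t ^ p * f₁ t

/-- The subspace `C_{-1,0}(0,∞)`: functions of the form `t^p f₁(t)` with `-1 < p < 0`
and `f₁` continuous on `[0,∞)`. -/
def Cm10 (f : ℝ → ℝ) : Prop :=
  ∃ p : ℝ, -1 < p ∧ p < 0 ∧ ∃ f₁ : ℝ → ℝ, ContinuousOn f₁ (Set.Ici 0) ∧
    ∀ t : ℝ, 0 < t → f t = t ^ p * f₁ t

def Nice (g : ℝ → ℝ) : Prop :=
  ContinuousOn g (Ioi 0) ∧ ∀ T : ℝ, 0 < T → IntervalIntegrable g volume 0 T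

lemma half_int {a b : ℝ → ℝ} (ha : Nice a) (hb : Nice b) {t : ℝ} (ht : 0 < t) :
    IntervalIntegrable (fun τ => a (t - τ) * b τ) volume 0 (t / 2) := by
  refine (hb.2 (t / 2) (by positivity)).continuousOn_mul ?_
  refine ha.1.comp (by fun_prop) ?_
  intro x hx
  rw [uIcc_of_le (by positivity)] at hx
  have := hx.2
  simp only [mem_Ioi]
  linarith

lemma half_int' {a b : ℝ → ℝ} (ha : Nice a) (hb : Nice b) {t : ℝ} (ht : 0 < t) :
    IntervalIntegrable (fun τ => a (t - τ) * b τ) volume (t / 2) t := by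
  have h := ((half_int hb ha ht).comp_sub_left t).symm
  simp only [sub_sub_cancel, sub_zero] at h
  have e : t - t / 2 = t / 2 := by ring
  rw [e] at h
  simpa only [mul_comm] using h

lemma conv_int {a b : ℝ → ℝ} (ha : Nice a) (hb : Nice b) {t : ℝ} (ht : 0 < t) :
    IntervalIntegrable (fun τ => a (t - τ) * b τ) volume 0 t :=
  (half_int ha hb ht).trans (half_int' ha hb ht)

lemma lconv_split {a b : ℝ → ℝ} (ha : Nice a) (hb : Nice b) {t : ℝ} (ht : 0 < t) :
    lconv a b t = (∫ τ in (0:ℝ)..t / 2, a (t - τ) * b τ)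
      + ∫ τ in (0:ℝ)..t / 2, b (t - τ) * a τ := by
  unfold lconv
  rw [← intervalIntegral.integral_add_adjacent_intervals (half_int ha hb ht) (half_int' ha hb ht)]
  congr 1
  have := intervalIntegral.integral_comp_sub_left (a := t / 2) (b := t)
    (fun τ => b (t - τ) * a τ) t
  simp only [sub_sub_cancel, sub_self] at this
  have e : t - t / 2 = t / 2 := by ring
  rw [e] at this
  rw [← this]
  simp only [mul_comm]

lemma lconv_comm (a b : ℝ → ℝ) (t : ℝ) : lconv a b t = lconv b a t := by
  unfold lconv
  have := intervalIntegral.integral_comp_sub_left (a := 0) (b := t)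
    (fun τ => b (t - τ) * a τ) t
  simp only [sub_sub_cancel, sub_self, sub_zero] at this
  rw [← this]
  simp only [mul_comm]

lemma half_cont {a b : ℝ → ℝ} (ha : Nice a) (hb : Nice b) {t₀ : ℝ} (ht : 0 < t₀) :
    ContinuousAt (fun t => ∫ τ in (0:ℝ)..t / 2, a (t - τ) * b τ) t₀ := by
  have hnh : ∀ᶠ t in 𝓝 t₀, t ∈ Ioo (t₀ / 2) (2 * t₀) :=
    Ioo_mem_nhds (by linarith) (by linarith)
  have key : ContinuousAt (fun t => ∫ τ, (Iio (t / 2)).indicator (fun τ => a (t - τ) * b τ) τ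
      ∂(volume.restrict (Ioc 0 t₀))) t₀ := by
    obtain ⟨M, hM⟩ := (isCompact_Icc (a := t₀ / 4) (b := 2 * t₀)).exists_bound_of_continuousOn
      (ha.1.mono (fun x hx => by have := hx.1; simp only [mem_Ioi]; linarith))
    refine continuousAt_of_dominated (bound := fun τ => M * ‖b τ‖) ?_ ?_ ?_ ?_
    · filter_upwards [hnh] with t htt
      rw [aestronglyMeasurable_indicator_iff measurableSet_Iio,
        Measure.restrict_restrict measurableSet_Iio]
      have h := half_int ha hb (show 0 < t by linarith [htt.1])
      rw [intervalIntegrable_iff_integrableOn_Ioc_of_le (by linarith [htt.1])] at h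
      refine h.aestronglyMeasurable.mono_measure (Measure.restrict_mono ?_ le_rfl)
      intro x hx
      exact ⟨hx.2.1, le_of_lt hx.1⟩
    · filter_upwards [hnh] with t htt
      refine (ae_restrict_iff' measurableSet_Ioc).2 (Eventually.of_forall fun τ hτ => ?_)
      have hM0 : 0 ≤ M := (norm_nonneg _).trans (hM t₀ ⟨by linarith, by linarith⟩)
      by_cases h : τ ∈ Iio (t / 2)
      · rw [indicator_of_mem h, norm_mul]
        have h' : τ < t / 2 := h
        have := hM (t - τ) ⟨by linarith [htt.1], by linarith [htt.2, hτ.1]⟩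
        gcongr
      · rw [indicator_of_notMem h, norm_zero]
        positivity
    · have h := hb.2 t₀ ht
      rw [intervalIntegrable_iff_integrableOn_Ioc_of_le ht.le] at h
      exact h.norm.const_mul M
    · have hne : ∀ᵐ τ ∂(volume.restrict (Ioc 0 t₀)), τ ≠ t₀ / 2 :=
        ae_restrict_of_ae (Measure.ae_ne volume (t₀ / 2))
      filter_upwards [hne] with τ hτ
      rcases lt_or_gt_of_ne hτ with h | h
      · have e : (fun t => (Iio (t / 2)).indicator (fun τ => a (t - τ) * b τ) τ)
            =ᶠ[𝓝 t₀] fun t => a (t - τ) * b τ := by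
          filter_upwards [Ioi_mem_nhds (show 2 * τ < t₀ by linarith)] with t htt
          have : 2 * τ < t := htt
          rw [indicator_of_mem]
          simp only [mem_Iio]; linarith
        refine ContinuousAt.congr ?_ e.symm
        refine ContinuousAt.mul ?_ continuousAt_const
        have : ContinuousAt a (t₀ - τ) := ha.1.continuousAt (Ioi_mem_nhds (by linarith))
        exact ContinuousAt.comp (f := fun t => t - τ) this (by fun_prop)
      · have e : (fun t => (Iio (t / 2)).indicator (fun τ => a (t - τ) * b τ) τ)
            =ᶠ[𝓝 t₀] fun t => 0 := by
          filter_upwards [Iio_mem_nhds (show t₀ < 2 * τ by linarith)] with t htt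
          have : t < 2 * τ := htt
          rw [indicator_of_notMem]
          simp only [mem_Iio]; linarith
        exact ContinuousAt.congr continuousAt_const e.symm
  refine key.congr ?_
  filter_upwards [hnh] with t htt
  rw [integral_indicator measurableSet_Iio, Measure.restrict_restrict measurableSet_Iio,
    intervalIntegral.integral_of_le (by linarith [htt.1]), integral_Ioc_eq_integral_Ioo]
  congr 2
  ext x
  simp only [mem_inter_iff, mem_Iio, mem_Ioc, mem_Ioo]
  have := htt.2
  constructor
  · rintro ⟨h1, h2, h3⟩; exact ⟨h2, h1⟩
  · rintro ⟨h1, h2⟩; exact ⟨h2, h1, by linarith⟩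

lemma conv_cont {a b : ℝ → ℝ} (ha : Nice a) (hb : Nice b) : ContinuousOn (lconv a b) (Ioi 0) := by
  intro t ht
  refine ContinuousAt.continuousWithinAt ?_
  refine ((half_cont ha hb ht).add (half_cont hb ha ht)).congr ?_
  filter_upwards [Ioi_mem_nhds ht] with s hs
  exact (lconv_split ha hb hs).symm

lemma fub_aux {k g : ℝ → ℝ} {t s : ℝ} (hs : s ∈ Ioc 0 t) :
    ∫ τ, (Ioc 0 t).indicator g τ * (Ioc 0 t).indicator k (s - τ) = lconv k g s := by
  unfold lconv
  rw [intervalIntegral.integral_of_le hs.1.le, integral_Ioc_eq_integral_Ioo,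
    ← integral_indicator measurableSet_Ioo]
  congr 1
  ext τ
  have h2 := hs.2
  by_cases h : τ ∈ Ioo 0 s
  · rw [indicator_of_mem h, indicator_of_mem, indicator_of_mem, mul_comm]
    · exact ⟨by linarith [h.2], by linarith [h.1]⟩
    · exact ⟨h.1, by linarith [h.2]⟩
  · rw [indicator_of_notMem h]
    by_cases h0 : 0 < τ
    · rw [indicator_of_notMem (a := s - τ), mul_zero]
      intro h'
      exact h ⟨h0, by linarith [h'.1]⟩
    · rw [indicator_of_notMem (a := τ), zero_mul]
      exact fun h' => h0 h'.1

lemma fub_int {k g : ℝ → ℝ} (hk : Nice k) (hg : Nice g) {t : ℝ} (ht : 0 < t) :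
    Integrable (Function.uncurry fun s τ =>
      (Ioc 0 t).indicator g τ * (Ioc 0 t).indicator k (s - τ))
      ((volume : Measure ℝ).prod (volume : Measure ℝ)) := by
  have h1 := hk.2 t ht
  have h2 := hg.2 t ht
  rw [intervalIntegrable_iff_integrableOn_Ioc_of_le ht.le,
    ← integrable_indicator_iff measurableSet_Ioc] at h1 h2
  exact Integrable.convolution_integrand (ContinuousLinearMap.mul ℝ ℝ) h2 h1

lemma conv_nice {k g : ℝ → ℝ} (hk : Nice k) (hg : Nice g) : Nice (lconv k g) := by
  refine ⟨conv_cont hk hg, fun t ht => ?_⟩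
  rw [intervalIntegrable_iff_integrableOn_Ioc_of_le ht.le]
  refine IntegrableOn.congr_fun (fub_int hk hg ht).integral_prod_left.integrableOn ?_
    measurableSet_Ioc
  intro s hs
  exact fub_aux hs

lemma fub {k g : ℝ → ℝ} (hk : Nice k) (hg : Nice g) {t : ℝ} (ht : 0 < t) :
    ∫ s in (0:ℝ)..t, lconv k g s = lconv (fun u => ∫ s in (0:ℝ)..u, k s) g t := by
  rw [intervalIntegral.integral_of_le ht.le,
    ← setIntegral_congr_fun measurableSet_Ioc (fun s hs => fub_aux hs)]
  rw [integral_integral_swap]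
  · unfold lconv
    rw [intervalIntegral.integral_of_le ht.le, ← integral_indicator measurableSet_Ioc]
    congr 1
    ext τ
    rw [integral_const_mul]
    by_cases h : τ ∈ Ioc 0 t
    · rw [indicator_of_mem h, indicator_of_mem h, mul_comm]
      congr 1
      rw [← intervalIntegral.integral_of_le ht.le,
        intervalIntegral.integral_comp_sub_right (fun x => (Ioc 0 t).indicator k x) τ,
        intervalIntegral.integral_of_le (by linarith), setIntegral_indicator measurableSet_Ioc]
      beta_reduce
      rw [intervalIntegral.integral_of_le (by linarith [h.2])]
      congr 2
      ext x
      have := h.1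
      simp only [mem_inter_iff, mem_Ioc]
      constructor
      · rintro ⟨h1, h2⟩; exact ⟨h2.1, h1.2⟩
      · rintro ⟨h1, h2⟩; exact ⟨⟨by linarith, h2⟩, h1, by linarith⟩
    · rw [indicator_of_notMem h, indicator_of_notMem h, zero_mul]
  · refine (fub_int hk hg ht).mono_measure ?_
    exact Measure.prod_mono Measure.restrict_le_self le_rfl

lemma nice_hasDerivAt {g : ℝ → ℝ} (hg : Nice g) {t : ℝ} (ht : 0 < t) :
    HasDerivAt (fun u => ∫ s in (0:ℝ)..u, g s) (g t) t :=
  intervalIntegral.integral_hasDerivAt_right (hg.2 t ht)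
    (hg.1.stronglyMeasurableAtFilter isOpen_Ioi t ht) (hg.1.continuousAt (Ioi_mem_nhds ht))

lemma lconv_congr {k f g : ℝ → ℝ} (h : ∀ t, 0 < t → f t = g t) {t : ℝ} (ht : 0 < t) :
    lconv k f t = lconv k g t := by
  unfold lconv
  rw [intervalIntegral.integral_of_le ht.le, intervalIntegral.integral_of_le ht.le]
  refine setIntegral_congr_fun measurableSet_Ioc fun s hs => ?_
  simp only [h s hs.1]

lemma key_deriv {k g G : ℝ → ℝ} (hk : Nice k) (hg : Nice g)
    (hG : ∀ t, 0 < t → G t = ∫ s in (0:ℝ)..t, g s) {t : ℝ} (ht : 0 < t) :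
    HasDerivAt (lconv k G) (lconv k g t) t := by
  refine (nice_hasDerivAt (conv_nice hk hg) ht).congr_of_eventuallyEq ?_
  filter_upwards [Ioi_mem_nhds ht] with s hs
  rw [lconv_congr hG hs, lconv_comm, ← fub hg hk hs]
  simp only [lconv_comm k g]

lemma nice_of_continuous {g : ℝ → ℝ} (hg : Continuous g) : Nice g :=
  ⟨hg.continuousOn, fun _ _ => hg.intervalIntegrable _ _⟩

lemma Nice.sub' {f g : ℝ → ℝ} (hf : Nice f) (hg : Nice g) : Nice (fun u => f u - g u) :=
  ⟨hf.1.sub hg.1, fun T hT => (hf.2 T hT).sub (hg.2 T hT)⟩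

lemma iter_step {A B : ℝ → ℝ} (h : ∀ t, 0 < t → HasDerivAt A (B t) t) (m : ℕ) {t : ℝ}
    (ht : 0 < t) : iteratedDeriv (m + 1) A t = iteratedDeriv m B t := by
  rw [iteratedDeriv_succ']
  refine Filter.EventuallyEq.iteratedDeriv_eq m ?_
  filter_upwards [Ioi_mem_nhds ht] with s hs
  exact (h s hs).deriv

lemma ftc_zero {f : ℝ → ℝ} {c : ℝ} (hf : ∀ t, 0 < t → DifferentiableAt ℝ f t)
    (hf' : Nice (deriv f)) (hc : Tendsto f (𝓝[>] 0) (𝓝 c)) {t : ℝ} (ht : 0 < t) :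
    f t - c = ∫ s in (0:ℝ)..t, deriv f s :=
  (intervalIntegral.integral_eq_sub_of_hasDerivAt_of_tendsto ht
    (fun x hx => (hf x hx.1).hasDerivAt) (hf'.2 t ht) hc
    ((hf t ht).continuousAt.tendsto.mono_left nhdsWithin_le_nhds)).symm

lemma nice_of_deriv {f : ℝ → ℝ} {c : ℝ} (hf : ∀ t, 0 < t → DifferentiableAt ℝ f t)
    (hf' : Nice (deriv f)) (hc : Tendsto f (𝓝[>] 0) (𝓝 c)) : Nice f := by
  refine ⟨fun t ht => (hf t ht).continuousAt.continuousWithinAt, fun T hT => ?_⟩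
  have h1 : ContinuousOn (fun t => c + ∫ s in (0:ℝ)..t, deriv f s) (uIcc 0 T) :=
    continuousOn_const.add (intervalIntegral.continuousOn_primitive_interval'
      (hf'.2 T hT) left_mem_uIcc)
  refine h1.intervalIntegrable.congr ?_
  intro t ht
  rw [uIoc_of_le hT.le] at ht
  simp only
  rw [← ftc_zero hf hf' hc ht.1]
  ring

lemma nice_of_iter (n : ℕ) : ∀ (f : ℝ → ℝ) (c : ℕ → ℝ),
    (∀ j < n, ∀ t : ℝ, 0 < t → DifferentiableAt ℝ (iteratedDeriv j f) t) →
    Nice (iteratedDeriv n f) →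
    (∀ j < n, Tendsto (iteratedDeriv j f) (𝓝[>] 0) (𝓝 (c j))) → Nice f := by
  induction n with
  | zero => intro f c _ h _; simpa using h
  | succ n ih =>
    intro f c h1 h2 h3
    have h0 : ∀ t, 0 < t → DifferentiableAt ℝ f t := by simpa using h1 0 (by omega)
    have h0' : Tendsto f (𝓝[>] 0) (𝓝 (c 0)) := by simpa using h3 0 (by omega)
    refine nice_of_deriv h0 ?_ h0'
    refine ih (deriv f) (fun j => c (j + 1)) ?_ ?_ ?_
    · intro j hj; rw [← iteratedDeriv_succ']; exact h1 (j + 1) (by omega)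
    · rw [← iteratedDeriv_succ']; exact h2
    · intro j hj; rw [← iteratedDeriv_succ']; exact h3 (j + 1) (by omega)

lemma int_pow (j : ℕ) (t : ℝ) :
    t ^ (j + 1) / (j + 1).factorial = ∫ s in (0:ℝ)..t, s ^ j / j.factorial := by
  rw [intervalIntegral.integral_div, integral_pow, Nat.factorial_succ]
  push_cast
  have : (j.factorial : ℝ) ≠ 0 := by positivity
  field_simp
  simp

lemma poly_nice (n : ℕ) (c : ℕ → ℝ) :
    Nice (fun u => ∑ j ∈ Finset.range n, c j * u ^ j / j.factorial) :=
  nice_of_continuous (by fun_prop)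

lemma rem_diff {k : ℝ → ℝ} (hk : Nice k) (n : ℕ) : ∀ (f : ℝ → ℝ) (c : ℕ → ℝ),
    (∀ j < n, ∀ t : ℝ, 0 < t → DifferentiableAt ℝ (iteratedDeriv j f) t) →
    Nice (iteratedDeriv n f) →
    (∀ j < n, Tendsto (iteratedDeriv j f) (𝓝[>] 0) (𝓝 (c j))) →
    ∀ m < n, ∀ t : ℝ, 0 < t → DifferentiableAt ℝ (iteratedDeriv m (lconv k (fun u =>
      f u - ∑ j ∈ Finset.range n, c j * u ^ j / j.factorial))) t := by
  induction n with
  | zero => intro f c _ _ _ m hm; omega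
  | succ n ih =>
    intro f c h1 h2 h3
    have h0 : ∀ t, 0 < t → DifferentiableAt ℝ f t := by simpa using h1 0 (by omega)
    have h0' : Tendsto f (𝓝[>] 0) (𝓝 (c 0)) := by simpa using h3 0 (by omega)
    have g1 : ∀ j < n, ∀ t : ℝ, 0 < t → DifferentiableAt ℝ (iteratedDeriv j (deriv f)) t := by
      intro j hj; rw [← iteratedDeriv_succ']; exact h1 (j + 1) (by omega)
    have g2 : Nice (iteratedDeriv n (deriv f)) := by rw [← iteratedDeriv_succ']; exact h2
    have g3 : ∀ j < n, Tendsto (iteratedDeriv j (deriv f)) (𝓝[>] 0) (𝓝 (c (j + 1))) := by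
      intro j hj; rw [← iteratedDeriv_succ']; exact h3 (j + 1) (by omega)
    have hf' : Nice (deriv f) := nice_of_iter n (deriv f) (fun j => c (j + 1)) g1 g2 g3
    have hp := poly_nice n (fun j => c (j + 1))
    have hD : ∀ t, 0 < t → HasDerivAt (lconv k (fun u =>
        f u - ∑ j ∈ Finset.range (n + 1), c j * u ^ j / j.factorial))
        (lconv k (fun u => deriv f u -
          ∑ j ∈ Finset.range n, c (j + 1) * u ^ j / j.factorial) t) t := by
      intro t ht
      refine key_deriv hk (hf'.sub' hp) ?_ ht
      intro t ht
      rw [intervalIntegral.integral_sub (hf'.2 t ht) (hp.2 t ht), ← ftc_zero h0 hf' h0' ht,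
        intervalIntegral.integral_finsetSum
          (fun j _ => (by fun_prop : Continuous _).intervalIntegrable _ _),
        Finset.sum_range_succ']
      simp only [mul_div_assoc, intervalIntegral.integral_const_mul, ← int_pow]
      simp
      ring
    intro m hm t ht
    cases m with
    | zero => rw [iteratedDeriv_zero]; exact (hD t ht).differentiableAt
    | succ m =>
      refine (ih (deriv f) (fun j => c (j + 1)) g1 g2 g3 m (by omega) t ht).congr_of_eventuallyEq ?_
      filter_upwards [Ioi_mem_nhds ht] with s hs
      exact iter_step hD m hs

lemma pow_iter {k : ℝ → ℝ} (hk : Nice k) (m j : ℕ) : ∀ t : ℝ, 0 < t →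
    iteratedDeriv (m + j + 1) (lconv k (fun u => u ^ j / j.factorial)) t
      = iteratedDeriv m k t := by
  induction j with
  | zero =>
    intro t ht
    refine iter_step (fun t ht => ?_) m ht
    have e : lconv k (fun u => u ^ 0 / (Nat.factorial 0 : ℕ)) = fun u => ∫ s in (0:ℝ)..u, k s := by
      ext u
      rw [lconv_comm]
      simp [lconv]
    rw [e]
    exact nice_hasDerivAt hk ht
  | succ j ih =>
    intro t ht
    rw [← ih t ht]
    exact iter_step (fun t ht => key_deriv hk (nice_of_continuous (by fun_prop))
      (fun t _ => int_pow j t) ht) (m + j + 1) ht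

lemma iter_lin {n : ℕ} {W A : ℝ → ℝ} {u : ℕ → ℝ → ℝ} {c : ℕ → ℝ}
    (hW : ∀ t, 0 < t → W t = A t + ∑ j ∈ Finset.range n, c j * u j t)
    (hA : ∀ m < n, ∀ t : ℝ, 0 < t → DifferentiableAt ℝ (iteratedDeriv m A) t)
    (hu : ∀ j < n, ∀ m < n, ∀ t : ℝ, 0 < t → DifferentiableAt ℝ (iteratedDeriv m (u j)) t)
    (m : ℕ) (hm : m ≤ n) : ∀ t, 0 < t → iteratedDeriv m W t =
      iteratedDeriv m A t + ∑ j ∈ Finset.range n, c j * iteratedDeriv m (u j) t := by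
  induction m with
  | zero => simpa using hW
  | succ m ih =>
    intro t ht
    simp only [iteratedDeriv_succ]
    have hd : HasDerivAt (fun s => iteratedDeriv m A s +
        ∑ j ∈ Finset.range n, c j * iteratedDeriv m (u j) s)
        (deriv (iteratedDeriv m A) t +
          ∑ j ∈ Finset.range n, c j * deriv (iteratedDeriv m (u j)) t) t := by
      refine (hA m hm t ht).hasDerivAt.add (HasDerivAt.fun_sum fun j hj => ?_)
      exact (hu j (Finset.mem_range.1 hj) m hm t ht).hasDerivAt.const_mul _
    refine (hd.congr_of_eventuallyEq ?_).deriv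
    filter_upwards [Ioi_mem_nhds ht] with s hs
    exact ih (by omega) s hs

lemma Cm1.nice {f : ℝ → ℝ} (h : Cm1 f) : Nice f := by
  obtain ⟨p, hp, f₁, hf₁, he⟩ := h
  constructor
  · have : ContinuousOn (fun t : ℝ => t ^ p * f₁ t) (Ioi 0) := by
      refine ContinuousOn.mul ?_ (hf₁.mono Ioi_subset_Ici_self)
      exact fun t ht => (Real.continuousAt_rpow_const t p (Or.inl (ne_of_gt ht))).continuousWithinAt
    exact this.congr fun t ht => he t ht
  · intro T hT
    have h1 : IntervalIntegrable (fun t : ℝ => t ^ p * f₁ t) volume 0 T := by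
      refine (intervalIntegral.intervalIntegrable_rpow' hp).mul_continuousOn (hf₁.mono ?_)
      rw [uIcc_of_le hT.le]
      exact fun x hx => hx.1
    refine h1.congr fun t ht => ?_
    rw [uIoc_of_le hT.le] at ht
    exact (he t ht.1).symm

/-- For a kernel `k` locally integrable on `[0,∞)` that is, for each
`j ∈ {0,…,n-1}`, `(n-j-1)` times continuously differentiable on `(0,∞)` and such that
`I₀₊^{j+1} k = k * h_{j+1}` is `n` times differentiable on `(0,∞)`, one has
`dⁿ/dtⁿ (k * h_{j+1})(t) = k^{(n-j-1)}(t)` for `t > 0`; consequently, for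
`f ∈ Cⁿ_{-1}(0,∞)` with `f^{(j)}(0+) = c j`, the Caputo GFD admits the representation
`(∗D_{(k)} f)(t) = (D_{(k)} f)(t) - ∑_{j=0}^{n-1} f^{(j)}(0) k^{(n-j-1)}(t)`. -/
theorem statement16 (n : ℕ) (hn : 1 ≤ n) (k : ℝ → ℝ)
    (hk_int : MeasureTheory.LocallyIntegrableOn k (Set.Ici 0))
    (hk_smooth : ∀ j < n, ContDiffOn ℝ (n - j - 1 : ℕ) k (Set.Ioi 0))
    (hk_diff : ∀ j < n, ∀ m < n, ∀ t : ℝ, 0 < t →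
      DifferentiableAt ℝ
        (iteratedDeriv m (lconv k (fun u => u ^ j / j.factorial))) t) :
    (∀ j < n, ∀ t : ℝ, 0 < t →
        iteratedDeriv n (lconv k (fun u => u ^ j / j.factorial)) t
          = iteratedDeriv (n - j - 1) k t) ∧
      ∀ (f : ℝ → ℝ) (c : ℕ → ℝ),
        (∀ j < n, ∀ t : ℝ, 0 < t → DifferentiableAt ℝ (iteratedDeriv j f) t) →
        Cm1 (iteratedDeriv n f) →
        (∀ j < n, Filter.Tendsto (iteratedDeriv j f)
          (nhdsWithin 0 (Set.Ioi 0)) (nhds (c j))) →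
        ∀ t : ℝ, 0 < t →
          iteratedDeriv n (lconv k (fun u =>
            f u - ∑ j ∈ Finset.range n, c j * u ^ j / j.factorial)) t
            = iteratedDeriv n (lconv k f) t
              - ∑ j ∈ Finset.range n, c j * iteratedDeriv (n - j - 1) k t := by
  have hk : Nice k := by
    refine ⟨(hk_smooth 0 (by omega)).continuousOn, fun T hT => ?_⟩
    rw [intervalIntegrable_iff_integrableOn_Icc_of_le hT.le]
    exact hk_int.integrableOn_compact_subset (fun x hx => hx.1) isCompact_Icc
  have P1 : ∀ j < n, ∀ t : ℝ, 0 < t →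
        iteratedDeriv n (lconv k (fun u => u ^ j / j.factorial)) t
          = iteratedDeriv (n - j - 1) k t := by
    intro j hj t ht
    have := pow_iter hk (n - j - 1) j t ht
    rwa [show n - j - 1 + j + 1 = n by omega] at this
  refine ⟨P1, ?_⟩
  intro f c h1 h2 h3 t ht
  have hf : Nice f := nice_of_iter n f c h1 h2.nice h3
  have hA := rem_diff hk n f c h1 h2.nice h3
  have hp := poly_nice n c
  have hW : ∀ t, 0 < t → lconv k f t = lconv k (fun u =>
      f u - ∑ j ∈ Finset.range n, c j * u ^ j / j.factorial) t +
      ∑ j ∈ Finset.range n, c j * lconv k (fun u => u ^ j / j.factorial) t := by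
    intro t ht
    have hi : ∀ j : ℕ, IntervalIntegrable (fun τ => k (t - τ) * (τ ^ j / j.factorial)) volume 0 t :=
      fun j => conv_int hk (nice_of_continuous (g := fun u => u ^ j / j.factorial)
        (by fun_prop)) ht
    simp only [lconv, ← intervalIntegral.integral_const_mul]
    rw [← intervalIntegral.integral_finsetSum (fun j _ => (hi j).const_mul (c j)),
      ← intervalIntegral.integral_add (conv_int hk (hf.sub' hp) ht)]
    · congr 1
      ext τ
      rw [mul_sub, Finset.mul_sum, sub_add, ← Finset.sum_sub_distrib, Finset.sum_eq_zero, sub_zero]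
      intro j _
      ring
    · have := conv_int hk hp ht
      refine this.congr fun τ _ => ?_
      simp only [Finset.mul_sum]
      refine Finset.sum_congr rfl fun j _ => ?_
      ring
  have := iter_lin hW hA hk_diff n le_rfl t ht
  rw [this, Finset.sum_congr rfl (fun j hj => by rw [P1 j (Finset.mem_range.1 hj) t ht])]
  ring
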